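/- arXiv:2601.23192 — 2 statements merged into one kernel-verified Lean document; each statement's English description precedes it below -/
import Mathlib

section
/- Let C be a braided monoidal category, let f be a transparent object of C admitting a right dual, and let x be any object of C admitting a right dual. Then, giving f ⊗ x the right dual xᘁ ⊗ fᘁ with the standard composite coevaluation and evaluation, one has η(f ⊗ x) = η(f) ∘ η(x) in End(𝟙). -/
/-!
STATEMENT 2: Let `C` be a braided monoidal category, let `f` be a transparent object of `C`
admitting a right dual, and let `x` be any object of `C` admitting a right dual.  Then,
giving `f ⊗ x` the right dual `xᘁ ⊗ fᘁ` with the standard composite coevaluation and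
evaluation, one has `η(f ⊗ x) = η(f) ∘ η(x)` in `End(𝟙)`.
-/

open CategoryTheory MonoidalCategory

universe v u

variable {C : Type u} [Category.{v} C] [MonoidalCategory C] [BraidedCategory C]

/-- `f` is transparent if `β_{y,f} ∘ β_{f,y} = id_{f ⊗ y}` for every `y`. -/
def Transparent (f : C) : Prop :=
  ∀ y : C, (β_ f y).hom ≫ (β_ y f).hom = 𝟙 (f ⊗ y)

/-- `η(x) := ev_x ∘ β_{x,xᘁ} ∘ coev_x : 𝟙 ⟶ 𝟙`. -/
def eta (x xd : C) (coev : 𝟙_ C ⟶ x ⊗ xd) (ev : xd ⊗ x ⟶ 𝟙_ C) : 𝟙_ C ⟶ 𝟙_ C :=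
  coev ≫ (β_ x xd).hom ≫ ev

/-- The standard composite coevaluation `𝟙 ⟶ (f ⊗ x) ⊗ (xᘁ ⊗ fᘁ)` built from
coevaluations for `f` and `x`. -/
def tensorCoev (f fd x xd : C) (coevf : 𝟙_ C ⟶ f ⊗ fd) (coevx : 𝟙_ C ⟶ x ⊗ xd) :
    𝟙_ C ⟶ (f ⊗ x) ⊗ (xd ⊗ fd) :=
  coevf ≫ (f ◁ ((λ_ fd).inv ≫ (coevx ▷ fd) ≫ (α_ x xd fd).hom)) ≫
    (α_ f x (xd ⊗ fd)).inv

/-- The standard composite evaluation `(xᘁ ⊗ fᘁ) ⊗ (f ⊗ x) ⟶ 𝟙` built from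
evaluations for `f` and `x`. -/
def tensorEv (f fd x xd : C) (evf : fd ⊗ f ⟶ 𝟙_ C) (evx : xd ⊗ x ⟶ 𝟙_ C) :
    (xd ⊗ fd) ⊗ (f ⊗ x) ⟶ 𝟙_ C :=
  (α_ xd fd (f ⊗ x)).hom ≫ (xd ◁ ((α_ fd f x).inv ≫ (evf ▷ x) ≫ (λ_ x).hom)) ≫ evx

/-!
Write `s` for `η(f)` and `g : 𝟙 ⟶ xᘁ ⊗ x` for the coevaluation of `x` followed by the braiding.
In `η(f ⊗ x)` the loop of `f` encloses `g`.  As `f` is transparent, its crossing with `xᘁ` may be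
replaced by the inverse crossing, after which naturality of the braiding pulls `f` across `g`: the
loop of `f` then sits, unlinked, between the strands of `xᘁ` and `x`, where it is the scalar `s`.
Scalars move freely through every tensor factor, so `s` can be factored out.
-/

section Scalars

variable {D : Type*} [Category* D] [MonoidalCategory D]

/-- The action of a scalar `s : 𝟙 ⟶ 𝟙` of a monoidal category on all objects, by tensoring with `s`
on the left, as an element of the center of the category. -/
def unitEndToCatCenter (s : 𝟙_ D ⟶ 𝟙_ D) : CatCenter D where
  app X := (λ_ X).inv ≫ s ▷ X ≫ (λ_ X).hom
  naturality X Y φ := by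
    simp only [Functor.id_obj, Functor.id_map, leftUnitor_inv_naturality_assoc,
      whisker_exchange_assoc, leftUnitor_naturality, Category.assoc]

theorem unitEndToCatCenter_app (s : 𝟙_ D ⟶ 𝟙_ D) (X : D) :
    (unitEndToCatCenter s).app X = (λ_ X).inv ≫ s ▷ X ≫ (λ_ X).hom :=
  rfl

theorem unitEndToCatCenter_app_unit (s : 𝟙_ D ⟶ 𝟙_ D) :
    (unitEndToCatCenter s).app (𝟙_ D) = s := by
  rw [unitEndToCatCenter_app, unitors_equal, rightUnitor_naturality, unitors_inv_equal,
    Iso.inv_hom_id_assoc]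

theorem unitEndToCatCenter_app_whiskerRight (s : 𝟙_ D ⟶ 𝟙_ D) (X Y : D) :
    (unitEndToCatCenter s).app X ▷ Y = (unitEndToCatCenter s).app (X ⊗ Y) := by
  simp only [unitEndToCatCenter_app]
  monoidal

end Scalars

theorem unitEndToCatCenter_app_eq_whiskerLeft (s : 𝟙_ C ⟶ 𝟙_ C) (X : C) :
    (unitEndToCatCenter s).app X = (ρ_ X).inv ≫ X ◁ s ≫ (ρ_ X).hom := by
  rw [unitEndToCatCenter_app, ← rightUnitor_inv_braiding, Category.assoc,
    ← BraidedCategory.braiding_naturality_right_assoc, braiding_leftUnitor]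

theorem whiskerLeft_unitEndToCatCenter_app (s : 𝟙_ C ⟶ 𝟙_ C) (X Y : C) :
    X ◁ (unitEndToCatCenter s).app Y = (unitEndToCatCenter s).app (X ⊗ Y) := by
  rw [← unitEndToCatCenter_app_whiskerRight, unitEndToCatCenter_app_eq_whiskerLeft s X,
    unitEndToCatCenter_app]
  monoidal

theorem braiding_tensor_tensor_hom (W X Y Z : C) :
    (β_ (W ⊗ X) (Y ⊗ Z)).hom =
      𝟙 _ ⊗≫ W ◁ (β_ X Y).hom ▷ Z ⊗≫ (β_ W Y).hom ▷ (X ⊗ Z) ⊗≫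
        Y ◁ W ◁ (β_ X Z).hom ⊗≫ Y ◁ (β_ W Z).hom ▷ X ⊗≫ 𝟙 _ := by
  rw [BraidedCategory.braiding_tensor_left_hom, BraidedCategory.braiding_tensor_right_hom,
    BraidedCategory.braiding_tensor_right_hom]
  calc
    _ = 𝟙 _ ⊗≫ W ◁ (β_ X Y).hom ▷ Z ⊗≫ ((W ⊗ Y) ◁ (β_ X Z).hom ≫ (β_ W Y).hom ▷ (Z ⊗ X)) ⊗≫
          Y ◁ (β_ W Z).hom ▷ X ⊗≫ 𝟙 _ := by monoidal
    _ = _ := by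
      rw [whisker_exchange]
      monoidal

theorem rightUnitor_inv_whiskerLeft_braiding_inv {X Y : C} (g : 𝟙_ C ⟶ X ⊗ Y) (Z : C) :
    (ρ_ Z).inv ≫ Z ◁ g ≫ (α_ Z X Y).inv ≫ (β_ X Z).inv ▷ Y =
      (λ_ Z).inv ≫ g ▷ Z ≫ (α_ X Y Z).hom ≫ X ◁ (β_ Y Z).hom ≫ (α_ X Z Y).inv := by
  rw [← leftUnitor_inv_braiding, Category.assoc,
    ← BraidedCategory.braiding_naturality_left_assoc, BraidedCategory.braiding_tensor_left_hom]
  simp [← comp_whiskerRight]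

theorem rightUnitor_inv_whiskerLeft_braiding {X : C} (c : 𝟙_ C ⟶ X) (Z : C) :
    (ρ_ Z).inv ≫ Z ◁ c ≫ (β_ Z X).hom = (λ_ Z).inv ≫ c ▷ Z := by
  rw [BraidedCategory.braiding_naturality_right, rightUnitor_inv_braiding_assoc]

theorem nested_comp_braiding_inv_comp_braiding {W X Y Z : C}
    (c : 𝟙_ C ⟶ W ⊗ X) (g : 𝟙_ C ⟶ Y ⊗ Z) :
    c ⊗≫ W ◁ g ▷ X ⊗≫ (β_ Y W).inv ▷ (Z ⊗ X) ⊗≫ Y ◁ W ◁ (β_ Z X).hom =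
      g ⊗≫ Y ◁ c ▷ Z ⊗≫ 𝟙 _ := by
  calc
    _ = c ⊗≫ ((ρ_ W).inv ≫ W ◁ g ≫ (α_ W Y Z).inv ≫ (β_ Y W).inv ▷ Z) ▷ X ⊗≫
          Y ◁ W ◁ (β_ Z X).hom := by monoidal
    _ = 𝟙 _ ⊗≫ (𝟙_ C ◁ c ≫ g ▷ (W ⊗ X)) ⊗≫ Y ◁ (β_ Z W).hom ▷ X ⊗≫
          Y ◁ W ◁ (β_ Z X).hom := by
      rw [rightUnitor_inv_whiskerLeft_braiding_inv]
      monoidal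
    _ = g ⊗≫ Y ◁ ((ρ_ Z).inv ≫ Z ◁ c ≫ (β_ Z (W ⊗ X)).hom) ⊗≫ 𝟙 _ := by
      rw [whisker_exchange, BraidedCategory.braiding_tensor_right_hom]
      monoidal
    _ = _ := by
      rw [rightUnitor_inv_whiskerLeft_braiding]
      monoidal

theorem eta_tensor_transparent_general {f fd x xd : C}
    (coevf : 𝟙_ C ⟶ f ⊗ fd) (evf : fd ⊗ f ⟶ 𝟙_ C)
    (coevx : 𝟙_ C ⟶ x ⊗ xd) (evx : xd ⊗ x ⟶ 𝟙_ C)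
    (h : (β_ f xd).hom ≫ (β_ xd f).hom = 𝟙 (f ⊗ xd)) :
    eta (f ⊗ x) (xd ⊗ fd) (tensorCoev f fd x xd coevf coevx) (tensorEv f fd x xd evf evx) =
      eta f fd coevf evf ≫ eta x xd coevx evx := by
  have braiding_eq_inv : (β_ f xd).hom = (β_ xd f).inv := (Iso.comp_hom_eq_id _).1 h
  let s := eta f fd coevf evf
  let g := coevx ≫ (β_ x xd).hom
  calc
    _ = (coevf ⊗≫ f ◁ g ▷ fd ⊗≫ (β_ xd f).inv ▷ (x ⊗ fd) ⊗≫ xd ◁ f ◁ (β_ x fd).hom) ⊗≫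
          xd ◁ ((β_ f fd).hom ≫ evf) ▷ x ⊗≫ evx := by
      rw [eta, tensorCoev, tensorEv, braiding_tensor_tensor_hom, braiding_eq_inv]
      monoidal
    _ = g ≫ xd ◁ (unitEndToCatCenter s).app x ≫ evx := by
      rw [nested_comp_braiding_inv_comp_braiding, unitEndToCatCenter_app]
      dsimp only [s, eta]
      monoidal
    _ = s ≫ g ≫ evx := by
      rw [whiskerLeft_unitEndToCatCenter_app, CatCenter.naturality_assoc,
        unitEndToCatCenter_app_unit]
    _ = s ≫ eta x xd coevx evx := by rw [eta, Category.assoc]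

theorem eta_tensor_transparent
    (f fd x xd : C) (p : ExactPairing f fd) (q : ExactPairing x xd)
    (hf : Transparent f) :
    eta (f ⊗ x) (xd ⊗ fd)
        (tensorCoev f fd x xd p.coevaluation' q.coevaluation')
        (tensorEv f fd x xd p.evaluation' q.evaluation') =
      eta f fd p.coevaluation' p.evaluation' ≫
        eta x xd q.coevaluation' q.evaluation' :=
  eta_tensor_transparent_general _ _ _ _ (hf xd)
end

section
/- Let k be a field of characteristic different from 2 and let C be a k-linear braided monoidal category. Suppose f is a transparent object of C admitting a right dual with η(f) = −id_𝟙, and x is an object of C admitting a right dual such that f ⊗ x ≅ x. Then η(x) = 0 in End(𝟙). -/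
/-!
STATEMENT 4: Let `k` be a field of characteristic different from `2` and let `C` be a
`k`-linear braided monoidal category.  Suppose `f` is a transparent object of `C` admitting
a right dual with `η(f) = −id_𝟙`, and `x` is an object of `C` admitting a right dual such
that `f ⊗ x ≅ x`.  Then `η(x) = 0` in `End(𝟙)`.
-/

open CategoryTheory MonoidalCategory

universe v u

variable {C : Type u} [Category.{v} C] [MonoidalCategory C] [BraidedCategory C]

/-!
If `β_{f,x}` and `β_{x,f}` are inverse, the evaluation of `f ⊗ x` precomposed with the braiding is
the nested composite of those of `x` and `f`: the crossings between the two strands cancel.  Hence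
`η(f ⊗ x) = η(f) η(x)`, and since `η` depends only on the isomorphism class, `f ⊗ x ≅ x` and
`η(f) = -1` give `η(x) = -η(x)`.
-/

section Multiplicativity

theorem whiskerLeft_endUnit_eq_whiskerRight (x : C) (s : 𝟙_ C ⟶ 𝟙_ C) :
    x ◁ s = (ρ_ x).hom ≫ (λ_ x).inv ≫ s ▷ x ≫ (λ_ x).hom ≫ (ρ_ x).inv := by
  have slide : x ◁ s ≫ (β_ x (𝟙_ C)).hom = (β_ x (𝟙_ C)).hom ≫ s ▷ x :=
    BraidedCategory.braiding_naturality_right x s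
  rw [← cancel_mono (β_ x (𝟙_ C)).hom, slide]
  simp

variable {x xd y yd : C}

/- The inserted double braiding of `x` and `y` completes the crossings to `β_{x, yd ⊗ y}` and
`β_{y, x ⊗ xd}`, along which the evaluations of `y` and `x` then slide. -/
theorem braiding_tensor_comp_evaluation (h : (β_ x y).hom ≫ (β_ y x).hom = 𝟙 (x ⊗ y))
    (evx : xd ⊗ x ⟶ 𝟙_ C) (evy : yd ⊗ y ⟶ 𝟙_ C) :
    (β_ (x ⊗ y) (yd ⊗ xd)).hom ≫ (𝟙 _ ⊗≫ yd ◁ (evx ▷ y) ⊗≫ evy) =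
      𝟙 _ ⊗≫ x ◁ ((β_ y yd).hom ≫ evy) ▷ xd ⊗≫ (β_ x xd).hom ≫ evx := by
  calc
    _ = 𝟙 _ ⊗≫ x ◁ (β_ y yd).hom ▷ xd ⊗≫ (β_ x yd).hom ▷ y ▷ xd ⊗≫ yd ◁ 𝟙 (x ⊗ y) ▷ xd ⊗≫
          yd ◁ x ◁ (β_ y xd).hom ⊗≫ yd ◁ ((β_ x xd).hom ≫ evx) ▷ y ⊗≫ evy := by
      rw [BraidedCategory.braiding_tensor_right_hom, BraidedCategory.braiding_tensor_left_hom,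
        BraidedCategory.braiding_tensor_left_hom]
      monoidal
    _ = 𝟙 _ ⊗≫ x ◁ (β_ y yd).hom ▷ xd ⊗≫ (β_ x (yd ⊗ y)).hom ▷ xd ⊗≫
          yd ◁ ((β_ y (x ⊗ xd)).hom ≫ ((β_ x xd).hom ≫ evx) ▷ y) ⊗≫ evy := by
      rw [← h, BraidedCategory.braiding_tensor_right_hom,
        BraidedCategory.braiding_tensor_right_hom]
      monoidal
    _ = 𝟙 _ ⊗≫ x ◁ (β_ y yd).hom ▷ xd ⊗≫ (β_ x (yd ⊗ y)).hom ▷ xd ⊗≫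
          ((yd ⊗ y) ◁ ((β_ x xd).hom ≫ evx) ≫ evy ▷ 𝟙_ C) ⊗≫ 𝟙 _ := by
      rw [← BraidedCategory.braiding_naturality_right y, braiding_tensorUnit_right]
      monoidal
    _ = 𝟙 _ ⊗≫ x ◁ (β_ y yd).hom ▷ xd ⊗≫ ((β_ x (yd ⊗ y)).hom ≫ evy ▷ x) ▷ xd ⊗≫
          (β_ x xd).hom ≫ evx := by
      rw [whisker_exchange]
      monoidal
    _ = _ := by
      rw [← BraidedCategory.braiding_naturality_right x, braiding_tensorUnit_right]
      monoidal

theorem eta_tensor (h : (β_ x y).hom ≫ (β_ y x).hom = 𝟙 (x ⊗ y))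
    (coevx : 𝟙_ C ⟶ x ⊗ xd) (evx : xd ⊗ x ⟶ 𝟙_ C)
    (coevy : 𝟙_ C ⟶ y ⊗ yd) (evy : yd ⊗ y ⟶ 𝟙_ C) :
    eta (x ⊗ y) (yd ⊗ xd) (coevx ⊗≫ (x ◁ coevy) ▷ xd ⊗≫ 𝟙 _)
        (𝟙 _ ⊗≫ yd ◁ (evx ▷ y) ⊗≫ evy) =
      eta x xd coevx evx ≫ eta y yd coevy evy := by
  calc
    _ = coevx ⊗≫ (x ◁ eta y yd coevy evy) ▷ xd ⊗≫ (β_ x xd).hom ≫ evx := by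
      rw [eta, braiding_tensor_comp_evaluation h, eta]
      monoidal
    _ = 𝟙 _ ⊗≫ (𝟙_ C ◁ coevx ≫ eta y yd coevy evy ▷ (x ⊗ xd)) ⊗≫ (β_ x xd).hom ≫ evx := by
      rw [whiskerLeft_endUnit_eq_whiskerRight]
      monoidal
    _ = 𝟙 _ ⊗≫ (eta y yd coevy evy ▷ 𝟙_ C ≫ 𝟙_ C ◁ eta x xd coevx evx) ⊗≫ 𝟙 _ := by
      rw [whisker_exchange, eta, eta]
      monoidal
    _ = _ := by
      rw [← whisker_exchange]
      monoidal

end Multiplicativity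

theorem eta_eq_of_iso {x xd y yd : C} [ExactPairing x xd] [ExactPairing y yd] (e : x ≅ y) :
    eta x xd (η_ x xd) (ε_ x xd) = eta y yd (η_ y yd) (ε_ y yd) := by
  let : HasRightDual x := ⟨xd⟩
  let : HasRightDual y := ⟨yd⟩
  let mate : yd ⟶ xd := rightAdjointMate e.hom
  have coev_mate : η_ y yd ≫ y ◁ mate = η_ x xd ≫ e.hom ▷ xd :=
    coevaluation_comp_rightAdjointMate e.hom
  have mate_ev : mate ▷ x ≫ ε_ x xd = yd ◁ e.hom ≫ ε_ y yd :=
    rightAdjointMate_comp_evaluation e.hom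
  calc
    η_ x xd ≫ (β_ x xd).hom ≫ ε_ x xd
      = (η_ x xd ≫ e.hom ▷ xd) ≫ e.inv ▷ xd ≫ (β_ x xd).hom ≫ ε_ x xd := by simp
    _ = η_ y yd ≫ (y ◁ mate ≫ e.inv ▷ xd) ≫ (β_ x xd).hom ≫ ε_ x xd := by
      simp only [← coev_mate, Category.assoc]
    _ = η_ y yd ≫ (β_ y yd).hom ≫ yd ◁ e.inv ≫ mate ▷ x ≫ ε_ x xd := by
      simp only [whisker_exchange, Category.assoc,
        BraidedCategory.braiding_naturality_right_assoc,
        BraidedCategory.braiding_naturality_left_assoc]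
    _ = η_ y yd ≫ (β_ y yd).hom ≫ ε_ y yd := by
      rw [mate_ev, whiskerLeft_inv_hom_assoc]

theorem eta_comp_eta_eq_of_iso {f fd x xd : C} [ExactPairing f fd] [ExactPairing x xd]
    (h : (β_ f x).hom ≫ (β_ x f).hom = 𝟙 (f ⊗ x)) (e : f ⊗ x ≅ x) :
    eta f fd (η_ f fd) (ε_ f fd) ≫ eta x xd (η_ x xd) (ε_ x xd) =
      eta x xd (η_ x xd) (ε_ x xd) :=
  calc
    _ = eta (f ⊗ x) (xd ⊗ fd) (η_ (f ⊗ x) (xd ⊗ fd)) (ε_ (f ⊗ x) (xd ⊗ fd)) :=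
      (eta_tensor h _ _ _ _).symm
    _ = _ := eta_eq_of_iso e

theorem eta_eq_zero_of_fermion_fixed_general {R : Type*} [Semiring R] [Preadditive C] [Linear R C]
    (two_regular : IsSMulRegular (𝟙_ C ⟶ 𝟙_ C) (2 : R))
    {f fd x xd : C} [ExactPairing f fd] [ExactPairing x xd]
    (h : (β_ f x).hom ≫ (β_ x f).hom = 𝟙 (f ⊗ x))
    (eta_f : eta f fd (η_ f fd) (ε_ f fd) = -𝟙 (𝟙_ C)) (e : f ⊗ x ≅ x) :
    eta x xd (η_ x xd) (ε_ x xd) = 0 := by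
  have neg_eta : -eta x xd (η_ x xd) (ε_ x xd) = eta x xd (η_ x xd) (ε_ x xd) := by
    simpa only [eta_f, Preadditive.neg_comp, Category.id_comp] using
      eta_comp_eta_eq_of_iso (fd := fd) (xd := xd) h e
  apply two_regular.right_eq_zero_of_smul
  rw [two_smul, ← neg_eq_iff_add_eq_zero, neg_eta]

theorem eta_eq_zero_of_fermion_fixed
    (k : Type*) [Field k] (hk : ringChar k ≠ 2)
    {C : Type u} [Category.{v} C] [MonoidalCategory C] [BraidedCategory C]
    [Preadditive C] [Linear k C] [MonoidalPreadditive C] [MonoidalLinear k C]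
    (f fd x xd : C) (p : ExactPairing f fd) (q : ExactPairing x xd)
    (hf : Transparent f)
    (hetaf : eta f fd p.coevaluation' p.evaluation' = -𝟙 (𝟙_ C))
    (hfx : Nonempty (f ⊗ x ≅ x)) :
    eta x xd q.coevaluation' q.evaluation' = 0 := by
  exact eta_eq_zero_of_fermion_fixed_general ((Ring.two_ne_zero hk).isUnit.isSMulRegular _)
    (hf x) hetaf hfx.some
end
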